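/- arXiv:0708.0048 — 2 statements merged into one kernel-verified Lean document; each statement's English description precedes it below -/
import Mathlib

section
/- Let α ∈ (0,1) be irrational. For every m ≥ 0 and every j ≥ 1, the gap g_j^{(m)} = r_{k_j}^{(m)} − r_{k_{j−1}}^{(m)} equals q_2^{(m)} if {(j−1) α_{m+2}} < 1 − α_{m+2}, and equals q_2^{(m)} + q_1^{(m)} otherwise. -/
open Filter Finset

noncomputable section

/-- The Gauss map `G(x) = {1/x}` (with `G(0) = 0`, since `0⁻¹ = 0` in Lean). -/
def gaussMap (x : ℝ) : ℝ := Int.fract x⁻¹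

/-- `α_m = G^m(α)`. -/
def gaussIter (α : ℝ) (m : ℕ) : ℝ := gaussMap^[m] α

/-- The `h`-th partial quotient `a_h` of `α` (meaningful for `h ≥ 1`):
`a_h = ⌊(G^{h-1} α)⁻¹⌋`. -/
def pq (α : ℝ) (h : ℕ) : ℕ := ⌊(gaussIter α (h - 1))⁻¹⌋₊

/-- Denominators `q_n` of the convergents of `α`:
`q_0 = 1`, `q_1 = a_1`, `q_{n+2} = a_{n+2} q_{n+1} + q_n`. -/
def qden (α : ℝ) : ℕ → ℕ
  | 0 => 1
  | 1 => pq α 1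
  | (n + 2) => pq α (n + 2) * qden α (n + 1) + qden α n

/-- Numerators `p_n` of the convergents of `α`:
`p_0 = 0`, `p_1 = 1`, `p_{n+2} = a_{n+2} p_{n+1} + p_n`. -/
def pnum (α : ℝ) : ℕ → ℕ
  | 0 => 0
  | 1 => 1
  | (n + 2) => pq α (n + 2) * pnum α (n + 1) + pnum α n

/-- `f_n = (-1)^n (q_n α - p_n)`. -/
def fseq (α : ℝ) (n : ℕ) : ℝ := (-1) ^ n * ((qden α n : ℝ) * α - (pnum α n : ℝ))

/-- `r_k = min {r ≥ 0 : ⌊r α⌋ = k}`. -/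
def rmin (α : ℝ) (k : ℕ) : ℕ := sInf {r : ℕ | ⌊(r : ℝ) * α⌋ = (k : ℤ)}

/-- `t_k = #{r ≥ 0 : ⌊r α⌋ = k}`. -/
def tcount (α : ℝ) (k : ℕ) : ℕ := Set.ncard {r : ℕ | ⌊(r : ℝ) * α⌋ = (k : ℤ)}

/-- `(k_j)_{j ≥ 0}`: the increasing enumeration of `{k : t_k = a_1 + 1}`. -/
def kseq (α : ℝ) (j : ℕ) : ℕ := Nat.nth (fun k => tcount α k = pq α 1 + 1) j

/-- The gaps `g_j = r_{k_j} - r_{k_{j-1}}` (for `j ≥ 1`). -/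
def gseq (γ : ℝ) (j : ℕ) : ℕ := rmin γ (kseq γ j) - rmin γ (kseq γ (j - 1))

/-- `(j_h)_{h ≥ 0}`: the increasing enumeration of those `j ≥ 1` with
`g_j = q_2 + q_1`. -/
def jbig (γ : ℝ) (h : ℕ) : ℕ :=
  Nat.nth (fun j => 1 ≤ j ∧ gseq γ j = qden γ 2 + qden γ 1) h

/-- `ᾱ_1 = G(α)/(1 - G(α))`. -/
def abar (α : ℝ) : ℝ := gaussIter α 1 / (1 - gaussIter α 1)

/-- The Ostrowski representation `r = ∑_{h=0}^N c_h q_h` with `0 ≤ c_h ≤ a_{h+1}`,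
`c_{h-1} = 0` whenever `c_h = a_{h+1}`, and `c_N > 0`; `N = ord r`. -/
def IsOstrowski (α : ℝ) (r N : ℕ) (c : ℕ → ℕ) : Prop :=
  r = ∑ h ∈ Finset.range (N + 1), c h * qden α h ∧
  (∀ h, c h ≤ pq α (h + 1)) ∧
  (∀ h, c (h + 1) = pq α (h + 2) → c h = 0) ∧
  0 < c N ∧ ∀ h, N < h → c h = 0

/-- The order `ord r` of a positive integer `r`. -/
def ordOst (α : ℝ) (r : ℕ) : ℕ := sInf {N | ∃ c, IsOstrowski α r N c}

/-- `s(y) = 2 χ_{[0,1/2)}({y}) - 1`. -/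
def sfun (y : ℝ) : ℝ := if Int.fract y < 1 / 2 then 1 else -1

/-- `S_n(α, β) = ∑_{r=0}^n s({r α + β})`. -/
def Sgen (α β : ℝ) (n : ℕ) : ℝ := ∑ r ∈ Finset.range (n + 1), sfun ((r : ℝ) * α + β)

/-- `S_n(α) = S_n(α, 0)`. -/
def Ssum (α : ℝ) (n : ℕ) : ℝ := Sgen α 0 n

/-- `max_{0 ≤ n ≤ r} S_n(α)`. -/
def maxS (α : ℝ) (r : ℕ) : ℝ := sSup (Ssum α '' Set.Iic r)

/-- `min_{0 ≤ n ≤ r} S_n(α)`. -/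
def minS (α : ℝ) (r : ℕ) : ℝ := sInf (Ssum α '' Set.Iic r)

/-- `d_n(α, β) = ∑_{r=0}^{n-1} χ_{[0,β)}({r α}) - β n`. -/
def ddisc (α β : ℝ) (n : ℕ) : ℝ :=
  (∑ r ∈ Finset.range n, if Int.fract ((r : ℝ) * α) < β then (1 : ℝ) else 0) - β * n

/-- `j(r) = max {j + sgn R₁ - 1, 0}` from the decomposition `r = r_{k_j} + R₁ q₁ + R₀`. -/
def jfun (j R1 : ℕ) : ℕ := if R1 = 0 then j - 1 else j

/-- `i(r) = k_j - j + max {R₁ - 1, 0}` from the decomposition `r = r_{k_j} + R₁ q₁ + R₀`. -/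
def ifun (α : ℝ) (j R1 : ℕ) : ℕ := kseq α j - j + (R1 - 1)

/-- `S̃(r)` from the decomposition `r = r_{k_j} + R₁ q₁ + R₀`. -/
def Stil (α : ℝ) (r R1 R0 : ℕ) : ℝ :=
  if R0 = 0 then (if R1 = 0 then sfun ((r : ℝ) * α) else 0)
  else if R1 = 0 then ∑ i ∈ Finset.Icc (r - R0) r, sfun ((i : ℝ) * α)
  else ∑ i ∈ Finset.Icc (r - R0 + 1) r, sfun ((i : ℝ) * α)

/-- `sup_{β ∈ (0,1)} |d_n(α, β)| = n D_n^*(α)`. -/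
def nDsup (α : ℝ) (n : ℕ) : ℝ := sSup ((fun β => |ddisc α β n|) '' Set.Ioo (0 : ℝ) 1)

/-- The discrepancy `D_n^*(α) = sup_{β ∈ (0,1)} |d_n(α, β)| / n`. -/
def Dstar (α : ℝ) (n : ℕ) : ℝ :=
  sSup ((fun β => |ddisc α β n| / (n : ℝ)) '' Set.Ioo (0 : ℝ) 1)

/-!
For an angle `γ` with `γ⁻¹ = a + β`, where `a = a_1` and `β = G(γ)`, the solutions `r` of `⌊rγ⌋ = k`
form the interval `⌈k/γ⌉ ≤ r < ⌈(k+1)/γ⌉`, and `⌈k/γ⌉ = ka + ⌈kβ⌉`. Hence `t_k = a + 1` exactly when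
the sequence `⌈kβ⌉` increases from `k` to `k + 1`. Since `0 < β < 1`, it climbs by steps `0` or `1`,
leaving the value `j` at `k_j = ⌊j/β⌋`, where `r_{k_j} = k_j a + j`. Applying the Gauss map once
more, `β⁻¹ = b + δ` gives `k_j = jb + ⌊jδ⌋`, so that `g_j = (k_j - k_{j-1}) a + 1` is
`ab + 1 = q_2` or `ab + a + 1 = q_2 + q_1` according to whether `⌊jδ⌋` equals
`⌊(j-1)δ⌋` or exceeds it by one.
-/

section FloorCeil

variable {K : Type*} [Field K] [LinearOrder K] [IsStrictOrderedRing K] [FloorRing K] {x y β γ : K}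

lemma setOf_floor_natCast_mul_eq (hγ : 0 < γ) (k : ℕ) :
    {r : ℕ | ⌊(r : K) * γ⌋ = (k : ℤ)} = Set.Ico ⌈(k : K) / γ⌉₊ ⌈((k + 1 : ℕ) : K) / γ⌉₊ := by
  ext r
  simp [Int.floor_eq_iff, Nat.ceil_le, Nat.lt_ceil, div_le_iff₀ hγ, lt_div_iff₀ hγ]

lemma ceil_natCast_mul_le_succ (hβ : 0 ≤ β) (k : ℕ) :
    ⌈(k : K) * β⌉₊ ≤ ⌈((k + 1 : ℕ) : K) * β⌉₊ := by
  gcongr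
  exact k.le_succ

lemma ceil_natCast_succ_mul_le (hβ : β ≤ 1) (k : ℕ) :
    ⌈((k + 1 : ℕ) : K) * β⌉₊ ≤ ⌈(k : K) * β⌉₊ + 1 := by
  rw [Nat.ceil_le]
  push_cast
  linarith [Nat.le_ceil ((k : K) * β)]

lemma ceil_floor_natCast_div_mul (hβ₀ : 0 < β) (hβ₁ : β ≤ 1) (j : ℕ) :
    ⌈(⌊(j : K) / β⌋₊ : K) * β⌉₊ = j := by
  have lower : (⌊(j : K) / β⌋₊ : K) * β ≤ j :=
    (le_div_iff₀ hβ₀).1 (Nat.floor_le (by positivity))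
  have upper : (j : K) < ((⌊(j : K) / β⌋₊ : K) + 1) * β :=
    (div_lt_iff₀ hβ₀).1 (Nat.lt_floor_add_one _)
  refine le_antisymm (Nat.ceil_le.2 lower) (Nat.lt_succ_iff.1 ?_)
  rw [← Nat.cast_lt (α := K)]
  push_cast
  linarith [Nat.le_ceil ((⌊(j : K) / β⌋₊ : K) * β)]

lemma ceil_succ_floor_natCast_div_mul (hβ₀ : 0 < β) (hβ₁ : β ≤ 1) (j : ℕ) :
    ⌈((⌊(j : K) / β⌋₊ + 1 : ℕ) : K) * β⌉₊ = j + 1 := by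
  have upper : (j : K) < ((⌊(j : K) / β⌋₊ + 1 : ℕ) : K) * β := by
    rw [← div_lt_iff₀ hβ₀]
    exact_mod_cast Nat.lt_floor_add_one _
  refine le_antisymm ?_ (Nat.lt_ceil.2 upper)
  simpa only [ceil_floor_natCast_div_mul hβ₀ hβ₁ j] using
    ceil_natCast_succ_mul_le hβ₁ ⌊(j : K) / β⌋₊

lemma floor_add_eq_ite_fract (hx : 0 ≤ x) (hy₀ : 0 ≤ y) (hy₁ : y ≤ 1) :
    ⌊x + y⌋₊ = ⌊x⌋₊ + if Int.fract x < 1 - y then 0 else 1 := by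
  have split_x : (⌊x⌋₊ : K) + Int.fract x = x := by
    rw [natCast_floor_eq_intCast_floor hx, Int.floor_add_fract]
  have fract_lower := Int.fract_nonneg x
  have fract_upper := Int.fract_lt_one x
  rw [Nat.floor_eq_iff (by positivity)]
  split_ifs <;> push_cast <;> constructor <;> linarith

end FloorCeil

section UnitSteps

variable {f : ℕ → ℕ}

lemma add_count_step_eq (le_succ : ∀ k, f k ≤ f (k + 1))
    (succ_le : ∀ k, f (k + 1) ≤ f k + 1) (n : ℕ) :
    f 0 + Nat.count (fun k => f (k + 1) = f k + 1) n = f n := by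
  induction n with
  | zero => rw [Nat.count_zero, add_zero]
  | succ n ih =>
    rw [Nat.count_succ, ← add_assoc, ih]
    grind

lemma nth_step_eq (zero : f 0 = 0) (le_succ : ∀ k, f k ≤ f (k + 1))
    (succ_le : ∀ k, f (k + 1) ≤ f k + 1) {k : ℕ} (step : f (k + 1) = f k + 1) :
    Nat.nth (fun k => f (k + 1) = f k + 1) (f k) = k := by
  rw [← add_count_step_eq le_succ succ_le k, zero, zero_add]
  exact Nat.nth_count step

end UnitSteps

section GaussMap

lemma gaussMap_nonneg (x : ℝ) : 0 ≤ gaussMap x :=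
  Int.fract_nonneg _

lemma gaussMap_lt_one (x : ℝ) : gaussMap x < 1 :=
  Int.fract_lt_one _

lemma gaussIter_succ (x : ℝ) (m : ℕ) : gaussIter x (m + 1) = gaussMap (gaussIter x m) :=
  Function.iterate_succ_apply' ..

variable {x : ℝ}

lemma irrational_gaussMap (hx : Irrational x) : Irrational (gaussMap x) :=
  hx.inv.sub_intCast _

lemma irrational_gaussIter (hx : Irrational x) (m : ℕ) : Irrational (gaussIter x m) := by
  induction m with
  | zero => exact hx
  | succ m ih => exact gaussIter_succ x m ▸ irrational_gaussMap ih

lemma gaussIter_pos (hx : Irrational x) (hx₀ : 0 < x) : ∀ m, 0 < gaussIter x m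
  | 0 => hx₀
  | m + 1 => by
    refine lt_of_le_of_ne ?_ (irrational_gaussIter hx (m + 1)).ne_zero.symm
    exact gaussIter_succ x m ▸ gaussMap_nonneg _

lemma inv_eq_pq_one_add_gaussMap (hx : 0 ≤ x) : x⁻¹ = pq x 1 + gaussMap x := by
  change x⁻¹ = (⌊x⁻¹⌋₊ : ℝ) + Int.fract x⁻¹
  rw [natCast_floor_eq_intCast_floor (inv_nonneg.2 hx), Int.floor_add_fract]

lemma natCast_div_eq (hx : 0 ≤ x) (n : ℕ) :
    (n : ℝ) / x = n * gaussMap x + (n * pq x 1 : ℕ) := by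
  rw [div_eq_mul_inv, inv_eq_pq_one_add_gaussMap hx]
  push_cast
  ring

lemma ceil_natCast_div (hx : 0 ≤ x) (n : ℕ) :
    ⌈(n : ℝ) / x⌉₊ = ⌈(n : ℝ) * gaussMap x⌉₊ + n * pq x 1 := by
  rw [natCast_div_eq hx, Nat.ceil_add_natCast (mul_nonneg n.cast_nonneg (gaussMap_nonneg x))]

lemma floor_natCast_div (hx : 0 ≤ x) (n : ℕ) :
    ⌊(n : ℝ) / x⌋₊ = ⌊(n : ℝ) * gaussMap x⌋₊ + n * pq x 1 := by
  rw [natCast_div_eq hx, Nat.floor_add_natCast (mul_nonneg n.cast_nonneg (gaussMap_nonneg x))]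

end GaussMap

section Gaps

variable {γ : ℝ}

lemma tcount_eq_ceil_sub_ceil (hγ : 0 < γ) (k : ℕ) :
    tcount γ k = ⌈((k + 1 : ℕ) : ℝ) / γ⌉₊ - ⌈(k : ℝ) / γ⌉₊ := by
  rw [tcount, setOf_floor_natCast_mul_eq hγ, Set.ncard_Ico_nat]

lemma rmin_eq_ceil (hγ : 0 < γ) {k : ℕ} (h : ⌈(k : ℝ) / γ⌉₊ < ⌈((k + 1 : ℕ) : ℝ) / γ⌉₊) :
    rmin γ k = ⌈(k : ℝ) / γ⌉₊ := by
  rw [rmin, setOf_floor_natCast_mul_eq hγ, csInf_Ico h]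

lemma tcount_eq_pq_one_add_one_iff (hγ : 0 < γ) (k : ℕ) :
    tcount γ k = pq γ 1 + 1 ↔
      ⌈((k + 1 : ℕ) : ℝ) * gaussMap γ⌉₊ = ⌈(k : ℝ) * gaussMap γ⌉₊ + 1 := by
  have := ceil_natCast_mul_le_succ (gaussMap_nonneg γ) k
  rw [tcount_eq_ceil_sub_ceil hγ, ceil_natCast_div hγ.le, ceil_natCast_div hγ.le, add_one_mul]
  omega

lemma kseq_eq_floor (hγ : 0 < γ) (hβ : 0 < gaussMap γ) (j : ℕ) :
    kseq γ j = ⌊(j : ℝ) / gaussMap γ⌋₊ := by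
  have hβ₁ := (gaussMap_lt_one γ).le
  have ceil_eq := ceil_floor_natCast_div_mul hβ hβ₁ j
  have nth_eq := nth_step_eq (f := fun k : ℕ => ⌈(k : ℝ) * gaussMap γ⌉₊) (by simp)
    (ceil_natCast_mul_le_succ hβ.le) (ceil_natCast_succ_mul_le hβ₁)
    (k := ⌊(j : ℝ) / gaussMap γ⌋₊)
    (by simp only [ceil_eq, ceil_succ_floor_natCast_div_mul hβ hβ₁ j])
  simp only [ceil_eq] at nth_eq
  simpa only [kseq, tcount_eq_pq_one_add_one_iff hγ] using nth_eq

lemma rmin_kseq (hγ : 0 < γ) (hβ : 0 < gaussMap γ) (j : ℕ) :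
    rmin γ (kseq γ j) = j + kseq γ j * pq γ 1 := by
  have hβ₁ := (gaussMap_lt_one γ).le
  have ceil_kseq : ⌈(kseq γ j : ℝ) / γ⌉₊ = j + kseq γ j * pq γ 1 := by
    rw [ceil_natCast_div hγ.le, kseq_eq_floor hγ hβ, ceil_floor_natCast_div_mul hβ hβ₁]
  have ceil_kseq_succ :
      ⌈((kseq γ j + 1 : ℕ) : ℝ) / γ⌉₊ = j + 1 + (kseq γ j + 1) * pq γ 1 := by
    rw [ceil_natCast_div hγ.le, kseq_eq_floor hγ hβ, ceil_succ_floor_natCast_div_mul hβ hβ₁]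
  rw [rmin_eq_ceil hγ (by rw [ceil_kseq, ceil_kseq_succ, add_one_mul]; omega), ceil_kseq]

lemma kseq_succ (hγ : 0 < γ) (hβ : 0 < gaussMap γ) (j : ℕ) :
    kseq γ (j + 1) = kseq γ j + pq γ 2 +
      if Int.fract ((j : ℝ) * gaussMap (gaussMap γ)) < 1 - gaussMap (gaussMap γ)
        then 0 else 1 := by
  have hδ₀ := gaussMap_nonneg (gaussMap γ)
  have hδ₁ := (gaussMap_lt_one (gaussMap γ)).le
  have pq_two : pq γ 2 = pq (gaussMap γ) 1 := rfl
  rw [kseq_eq_floor hγ hβ, kseq_eq_floor hγ hβ, floor_natCast_div hβ.le, floor_natCast_div hβ.le,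
    pq_two, Nat.cast_add_one, add_one_mul, floor_add_eq_ite_fract (by positivity) hδ₀ hδ₁]
  ring

lemma gseq_succ (hγ : 0 < γ) (hβ : 0 < gaussMap γ) (j : ℕ) :
    gseq γ (j + 1) =
      if Int.fract ((j : ℝ) * gaussMap (gaussMap γ)) < 1 - gaussMap (gaussMap γ)
        then qden γ 2 else qden γ 2 + qden γ 1 := by
  rw [gseq, Nat.add_sub_cancel, rmin_kseq hγ hβ, rmin_kseq hγ hβ, kseq_succ hγ hβ]
  refine Nat.sub_eq_of_eq_add ?_
  split_ifs <;> simp only [qden] <;> ring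

end Gaps

theorem gap_eq_general {α : ℝ} {m j : ℕ} (hm : 0 < gaussIter α m) (hm' : 0 < gaussIter α (m + 1))
    (hj : 1 ≤ j) :
    (Int.fract (((j : ℝ) - 1) * gaussIter α (m + 2)) < 1 - gaussIter α (m + 2) →
      gseq (gaussIter α m) j = qden (gaussIter α m) 2) ∧
    (¬ Int.fract (((j : ℝ) - 1) * gaussIter α (m + 2)) < 1 - gaussIter α (m + 2) →
      gseq (gaussIter α m) j = qden (gaussIter α m) 2 + qden (gaussIter α m) 1) := by
  obtain ⟨i, rfl⟩ := Nat.exists_eq_add_of_le' hj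
  rw [gaussIter_succ] at hm'
  rw [Nat.cast_add_one, add_sub_cancel_right, gaussIter_succ α (m + 1), gaussIter_succ α m,
    gseq_succ hm hm']
  exact ⟨fun h => if_pos h, fun h => if_neg h⟩

/-- for every `m ≥ 0` and `j ≥ 1`, the gap
`g_j^{(m)} = r_{k_j}^{(m)} - r_{k_{j-1}}^{(m)}` equals `q_2^{(m)}` if
`{(j-1) α_{m+2}} < 1 - α_{m+2}` and `q_2^{(m)} + q_1^{(m)}` otherwise. -/
theorem gap_eq (α : ℝ) (hirr : Irrational α) (h0 : 0 < α) (h1 : α < 1)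
    (m j : ℕ) (hj : 1 ≤ j) :
    (Int.fract (((j : ℝ) - 1) * gaussIter α (m + 2)) < 1 - gaussIter α (m + 2) →
      gseq (gaussIter α m) j = qden (gaussIter α m) 2) ∧
    (¬ Int.fract (((j : ℝ) - 1) * gaussIter α (m + 2)) < 1 - gaussIter α (m + 2) →
      gseq (gaussIter α m) j = qden (gaussIter α m) 2 + qden (gaussIter α m) 1) := by
  exact gap_eq_general (gaussIter_pos hirr h0 m) (gaussIter_pos hirr h0 (m + 1)) hj
end
end

section
/- Let α ∈ (0,1) be irrational. A positive integer r satisfies r = r_{k_j} for some j > 0 if and only if in the Ostrowski representation r = Σ_{h=0}^N c_h q_h one has c_0 = c_1 = 0 and the smallest index h with c_h > 0 is an even number ≥ 2. -/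
open Filter Finset

noncomputable section

/-!
Writing `f_n = (-1)^n (q_n α - p_n)`, one has `f_0 = α`, `f_1 = 1 - a_1 α`, and `f` is positive,
strictly decreasing and satisfies `f_n = a_{n+2} f_{n+1} + f_{n+2}`.

Since `f_1 < α`, the integers `s` with `⌊s α⌋ = ⌊r α⌋` are the `a_1 + 1` integers
`r, …, r + a_1` exactly when `{r α} < f_1`; so the `r_{k_j}` are the `r` with `{r α} < f_1`.

On the other hand `r = ∑ c_h q_h` gives `r α ≡ ∑ (-1)^h c_h f_h` modulo `1`. If `m` is the smallest
index with `c_m > 0`, this sum is `(-1)^m T` with `0 < T < f_{m-1}` (where `f_{-1} = 1`). For even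
`m ≥ 2` this yields `{r α} = T < f_1`; for odd `m`, `{r α} = 1 - T > 1 - α ≥ f_1`; for `m = 0` the
condition `c_1 < a_2`, forced by `c_0 > 0`, gives `{r α} = T > f_1`.
-/

section ContinuedFraction

variable {α : ℝ}

theorem gaussIter_succ_s3 (α : ℝ) (n : ℕ) : gaussIter α (n + 1) = Int.fract (gaussIter α n)⁻¹ :=
  Function.iterate_succ_apply' gaussMap n α

theorem irrational_gaussIter_s3 (hα : Irrational α) (n : ℕ) : Irrational (gaussIter α n) := by
  induction n with
  | zero => exact hα
  | succ n ih =>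
    rw [gaussIter_succ_s3]
    exact ih.inv.sub_intCast _

theorem gaussIter_pos_s3 (hα : Irrational α) (h0 : 0 < α) : ∀ n, 0 < gaussIter α n
  | 0 => h0
  | n + 1 => by
    refine lt_of_le_of_ne ?_ (irrational_gaussIter_s3 hα (n + 1)).ne_zero.symm
    rw [gaussIter_succ_s3]
    exact Int.fract_nonneg _

theorem gaussIter_succ_lt_one (α : ℝ) (n : ℕ) : gaussIter α (n + 1) < 1 := by
  rw [gaussIter_succ_s3]
  exact Int.fract_lt_one _

theorem gaussIter_succ_eq_inv_sub {n : ℕ} (hn : 0 ≤ gaussIter α n) :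
    gaussIter α (n + 1) = (gaussIter α n)⁻¹ - pq α (n + 1) := by
  rw [gaussIter_succ_s3, pq, Nat.add_sub_cancel, natCast_floor_eq_intCast_floor (inv_nonneg.2 hn),
    Int.fract]

theorem one_le_pq_one (h0 : 0 < α) (h1 : α < 1) : 1 ≤ pq α 1 :=
  Nat.le_floor (by simpa [gaussIter] using ((one_lt_inv₀ h0).2 h1).le)

theorem fseq_zero (α : ℝ) : fseq α 0 = α := by simp [fseq, qden, pnum]

theorem fseq_one (α : ℝ) : fseq α 1 = 1 - pq α 1 * α := by simp [fseq, qden, pnum]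

theorem fseq_eq_pq_mul_add (α : ℝ) (n : ℕ) :
    fseq α n = pq α (n + 2) * fseq α (n + 1) + fseq α (n + 2) := by
  simp only [fseq, qden, pnum]
  push_cast
  ring

theorem fseq_succ (hα : Irrational α) (h0 : 0 < α) (n : ℕ) :
    fseq α (n + 1) = gaussIter α (n + 1) * fseq α n := by
  induction n with
  | zero =>
    rw [gaussIter_succ_eq_inv_sub (gaussIter_pos_s3 hα h0 0).le, fseq_zero, fseq_one, sub_mul]
    exact congrArg (· - _) (inv_mul_cancel₀ h0.ne').symm
  | succ n ih =>
    have hpos := gaussIter_pos_s3 hα h0 (n + 1)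
    rw [gaussIter_succ_eq_inv_sub hpos.le, sub_mul, ih, inv_mul_cancel_left₀ hpos.ne', ← ih]
    exact eq_sub_of_add_eq' (fseq_eq_pq_mul_add α n).symm

theorem fseq_pos (hα : Irrational α) (h0 : 0 < α) (n : ℕ) : 0 < fseq α n := by
  induction n with
  | zero => rwa [fseq_zero]
  | succ n ih =>
    rw [fseq_succ hα h0]
    exact mul_pos (gaussIter_pos_s3 hα h0 (n + 1)) ih

theorem fseq_strictAnti (hα : Irrational α) (h0 : 0 < α) : StrictAnti (fseq α) :=
  strictAnti_nat_of_succ_lt fun n => by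
    rw [fseq_succ hα h0]
    exact mul_lt_of_lt_one_left (fseq_pos hα h0 n) (gaussIter_succ_lt_one α n)

theorem fseq_one_lt (hα : Irrational α) (h0 : 0 < α) : fseq α 1 < α :=
  (fseq_strictAnti hα h0 one_pos).trans_eq (fseq_zero α)

end ContinuedFraction

section FloorFibers

variable {α : ℝ} {r k : ℕ}

theorem floor_add_mul_eq_floor_iff (h0 : 0 ≤ α) (r d : ℕ) :
    ⌊((r + d : ℕ) : ℝ) * α⌋ = ⌊(r : ℝ) * α⌋ ↔ Int.fract ((r : ℝ) * α) + d * α < 1 := by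
  have hd : 0 ≤ (d : ℝ) * α := by positivity
  have hr := Int.floor_add_fract ((r : ℝ) * α)
  have hnonneg := Int.fract_nonneg ((r : ℝ) * α)
  rw [Int.floor_eq_iff]
  push_cast
  constructor
  · rintro ⟨-, h⟩
    linarith
  · intro h
    constructor <;> linarith

theorem floor_rmin_mul (hk : tcount α k ≠ 0) : ⌊(rmin α k : ℝ) * α⌋ = k :=
  Nat.sInf_mem (Set.nonempty_of_ncard_ne_zero hk)

theorem rmin_le (hr : ⌊(r : ℝ) * α⌋ = k) : rmin α k ≤ r :=
  Nat.sInf_le hr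

theorem rmin_zero (α : ℝ) : rmin α 0 = 0 :=
  Nat.le_zero.1 (rmin_le (by simp))

theorem rmin_eq_of_fract_lt (hr : ⌊(r : ℝ) * α⌋ = k) (hfract : Int.fract ((r : ℝ) * α) < α) :
    rmin α k = r := by
  refine le_antisymm (rmin_le hr) (le_csInf ⟨r, hr⟩ fun s hs => ?_)
  by_contra! hsr
  have h0 : 0 < α := (Int.fract_nonneg _).trans_lt hfract
  have hstep : (s + 1 : ℝ) * α ≤ r * α := by gcongr; exact_mod_cast hsr
  have hrs := Int.floor_le ((s : ℝ) * α)
  rw [hs.trans hr.symm] at hrs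
  have hr' := Int.floor_add_fract ((r : ℝ) * α)
  linarith

theorem tcount_eq_of_fract_lt (hα : Irrational α) (h0 : 0 < α) (hr : ⌊(r : ℝ) * α⌋ = k)
    (hfract : Int.fract ((r : ℝ) * α) < fseq α 1) : tcount α k = pq α 1 + 1 := by
  have hf1 := fseq_one_lt hα h0
  have hfiber : {s : ℕ | ⌊(s : ℝ) * α⌋ = k} = Set.Ico r (r + (pq α 1 + 1)) := by
    ext s
    rw [Set.mem_ofPred_eq, Set.mem_Ico]
    have hle (hs : ⌊(s : ℝ) * α⌋ = k) : r ≤ s :=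
      rmin_eq_of_fract_lt hr (hfract.trans hf1) ▸ rmin_le hs
    refine (and_iff_right_of_imp hle).symm.trans (and_congr_right fun hrs => ?_)
    obtain ⟨d, rfl⟩ := Nat.exists_eq_add_of_le hrs
    rw [← hr, floor_add_mul_eq_floor_iff h0.le, add_lt_add_iff_left, Nat.lt_succ_iff]
    rw [fseq_one] at hfract hf1
    constructor
    · intro hd
      by_contra! hlt
      have hmul : (pq α 1 + 1 : ℝ) * α ≤ d * α := by gcongr; exact_mod_cast hlt
      linarith [Int.fract_nonneg ((r : ℝ) * α)]
    · intro hd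
      have hmul : (d : ℝ) * α ≤ pq α 1 * α := by gcongr
      linarith
  rw [tcount, hfiber, ← Finset.coe_Ico, Set.ncard_coe_finset, Nat.card_Ico, Nat.add_sub_cancel_left]

theorem fract_rmin_mul_lt_of_tcount_eq (h0 : 0 ≤ α) (hk : tcount α k = pq α 1 + 1) :
    Int.fract ((rmin α k : ℝ) * α) < fseq α 1 := by
  have hfloor : ⌊(rmin α k : ℝ) * α⌋ = k := floor_rmin_mul (by omega)
  by_contra! hge
  have hsub : {s : ℕ | ⌊(s : ℝ) * α⌋ = k} ⊆ Finset.Ico (rmin α k) (rmin α k + pq α 1) := by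
    intro s hs
    obtain ⟨d, rfl⟩ := Nat.exists_eq_add_of_le (rmin_le hs)
    have hd := (floor_add_mul_eq_floor_iff h0 _ d).1 (hs.trans hfloor.symm)
    rw [fseq_one] at hge
    have hlt : d < pq α 1 := by
      exact_mod_cast lt_of_mul_lt_mul_right (by linarith : (d : ℝ) * α < pq α 1 * α) h0
    simpa using hlt
  have hcard : tcount α k ≤ pq α 1 := by
    simpa [tcount] using Set.ncard_le_ncard hsub (Finset.finite_toSet _)
  omega

theorem exists_rmin_eq_iff_fract_lt (hα : Irrational α) (h0 : 0 < α) :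
    (∃ k, tcount α k = pq α 1 + 1 ∧ rmin α k = r) ↔ Int.fract ((r : ℝ) * α) < fseq α 1 := by
  constructor
  · rintro ⟨k, hk, rfl⟩
    exact fract_rmin_mul_lt_of_tcount_eq h0.le hk
  · intro hfract
    have hr : ⌊(r : ℝ) * α⌋ = (⌊(r : ℝ) * α⌋₊ : ℤ) :=
      (Int.natCast_floor_eq_floor (by positivity)).symm
    exact ⟨_, tcount_eq_of_fract_lt hα h0 hr hfract,
      rmin_eq_of_fract_lt hr (hfract.trans (fseq_one_lt hα h0))⟩

theorem tcount_zero (hα : Irrational α) (h0 : 0 < α) : tcount α 0 = pq α 1 + 1 :=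
  tcount_eq_of_fract_lt (r := 0) hα h0 (by simp) (by simpa using fseq_pos hα h0 1)

-- `Nat.nth p` takes the junk value `0` past the last element of a finite `p`; here `p 0` holds.
theorem range_nth_of_zero {p : ℕ → Prop} (hp : p 0) : Set.range (Nat.nth p) = {k | p k} :=
  (Nat.range_nth_subset.trans_eq (Set.insert_eq_of_mem hp)).antisymm Nat.subset_range_nth

theorem kseq_zero (hα : Irrational α) (h0 : 0 < α) : kseq α 0 = 0 :=
  Nat.nth_zero_of_zero (tcount_zero hα h0)

theorem exists_kseq_eq_iff (hα : Irrational α) (h0 : 0 < α) :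
    (∃ j, kseq α j = k) ↔ tcount α k = pq α 1 + 1 :=
  Set.ext_iff.1 (range_nth_of_zero (tcount_zero hα h0)) k

theorem exists_pos_eq_rmin_kseq_iff (hα : Irrational α) (h0 : 0 < α) (hr : 0 < r) :
    (∃ j, 0 < j ∧ r = rmin α (kseq α j)) ↔ Int.fract ((r : ℝ) * α) < fseq α 1 := by
  rw [← exists_rmin_eq_iff_fract_lt hα h0]
  constructor
  · rintro ⟨j, -, rfl⟩
    exact ⟨kseq α j, (exists_kseq_eq_iff hα h0).1 ⟨j, rfl⟩, rfl⟩
  · rintro ⟨k, hk, rfl⟩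
    obtain ⟨j, rfl⟩ := (exists_kseq_eq_iff hα h0).2 hk
    refine ⟨j, Nat.pos_of_ne_zero ?_, rfl⟩
    rintro rfl
    rw [kseq_zero hα h0, rmin_zero] at hr
    exact hr.false

end FloorFibers

section Ostrowski

variable {α : ℝ} {c : ℕ → ℕ} {r N m n : ℕ}

/-- The alternating sum `∑_{i < n} (-1)^i c_{m+i} f_{m+i}`: the contribution modulo `1` of the `n`
Ostrowski digits from the `m`-th on to `r α`, normalised so that its leading term has sign `+`. -/
def ostrowskiTail (α : ℝ) (c : ℕ → ℕ) (m n : ℕ) : ℝ :=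
  ∑ i ∈ Finset.range n, (-1) ^ i * (c (m + i) * fseq α (m + i))

theorem ostrowskiTail_succ (α : ℝ) (c : ℕ → ℕ) (m n : ℕ) :
    ostrowskiTail α c m (n + 1) = c m * fseq α m - ostrowskiTail α c (m + 1) n := by
  rw [ostrowskiTail, ostrowskiTail, Finset.sum_range_succ', sub_eq_neg_add,
    ← Finset.sum_neg_distrib]
  simp only [pow_succ, pow_zero, add_zero, one_mul, mul_neg_one, neg_mul, add_assoc, add_comm 1]

theorem ostrowskiTail_zero_add (hm : ∀ h < m, c h = 0) (n : ℕ) :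
    ostrowskiTail α c 0 (m + n) = (-1) ^ m * ostrowskiTail α c m n := by
  have hlead : ∑ i ∈ Finset.range m, (-1 : ℝ) ^ i * (c (0 + i) * fseq α (0 + i)) = 0 :=
    Finset.sum_eq_zero fun i hi => by simp [hm i (Finset.mem_range.1 hi)]
  rw [ostrowskiTail, ostrowskiTail, Finset.sum_range_add, hlead, zero_add, Finset.mul_sum]
  simp only [zero_add, pow_add, mul_assoc]

theorem qden_mul_eq (α : ℝ) (h : ℕ) : qden α h * α = pnum α h + (-1) ^ h * fseq α h := by
  rw [fseq, ← mul_assoc, ← mul_pow, neg_one_mul, neg_neg, one_pow]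
  ring

theorem sum_mul_qden_mul_eq (α : ℝ) (c : ℕ → ℕ) (n : ℕ) :
    ((∑ h ∈ Finset.range n, c h * qden α h : ℕ) : ℝ) * α =
      (∑ h ∈ Finset.range n, c h * pnum α h : ℕ) + ostrowskiTail α c 0 n := by
  rw [ostrowskiTail]
  push_cast
  rw [Finset.sum_mul, ← Finset.sum_add_distrib]
  refine Finset.sum_congr rfl fun h _ => ?_
  rw [mul_assoc, qden_mul_eq, zero_add]
  ring

theorem ostrowskiTail_mem_Ioo (hα : Irrational α) (h0 : 0 < α) (hc : ∀ h, c h ≤ pq α (h + 1))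
    (m n : ℕ) : ostrowskiTail α c (m + 1) n ∈ Set.Ioo (-fseq α (m + 1)) (fseq α m) := by
  induction n generalizing m with
  | zero => simpa [ostrowskiTail] using ⟨fseq_pos hα h0 (m + 1), fseq_pos hα h0 m⟩
  | succ n ih =>
    obtain ⟨hlower, hupper⟩ := ih (m + 1)
    have hpos := fseq_pos hα h0 (m + 1)
    have hnonneg : 0 ≤ c (m + 1) * fseq α (m + 1) := by positivity
    have hdigit : c (m + 1) * fseq α (m + 1) ≤ pq α (m + 2) * fseq α (m + 1) := by
      gcongr
      exact hc (m + 1)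
    have hrec := fseq_eq_pq_mul_add α m
    rw [ostrowskiTail_succ]
    constructor <;> linarith

theorem ostrowskiTail_pos (hα : Irrational α) (h0 : 0 < α) (hc : ∀ h, c h ≤ pq α (h + 1))
    (hm : 0 < c m) (n : ℕ) : 0 < ostrowskiTail α c m (n + 1) := by
  rw [ostrowskiTail_succ, sub_pos]
  exact (ostrowskiTail_mem_Ioo hα h0 hc m n).2.trans_le
    (le_mul_of_one_le_left (fseq_pos hα h0 m).le (by exact_mod_cast hm))

theorem ostrowskiTail_zero_lt_one (hα : Irrational α) (h0 : 0 < α)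
    (hc : ∀ h, c h ≤ pq α (h + 1)) (n : ℕ) : ostrowskiTail α c 0 (n + 1) < 1 := by
  have hdigit : c 0 * α ≤ pq α 1 * α := by
    gcongr
    exact hc 0
  have hlower := (ostrowskiTail_mem_Ioo hα h0 hc 0 n).1
  rw [zero_add, fseq_one] at hlower
  rw [ostrowskiTail_succ, fseq_zero]
  linarith

theorem ostrowskiTail_succ_lt_sub (hα : Irrational α) (h0 : 0 < α)
    (hc : ∀ h, c h ≤ pq α (h + 1)) (hm : c (m + 1) < pq α (m + 2)) (n : ℕ) :
    ostrowskiTail α c (m + 1) n < fseq α m - fseq α (m + 1) := by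
  cases n with
  | zero => simpa [ostrowskiTail] using fseq_strictAnti hα h0 m.lt_succ_self
  | succ n =>
    have hdigit : (c (m + 1) + 1 : ℝ) * fseq α (m + 1) ≤ pq α (m + 2) * fseq α (m + 1) := by
      have hpos := fseq_pos hα h0 (m + 1)
      gcongr
      exact_mod_cast hm
    have hlower := (ostrowskiTail_mem_Ioo hα h0 hc (m + 1) n).1
    have hrec := fseq_eq_pq_mul_add α m
    rw [ostrowskiTail_succ]
    linarith

theorem fseq_one_lt_ostrowskiTail_zero (hα : Irrational α) (h0 : 0 < α)
    (hc : ∀ h, c h ≤ pq α (h + 1)) (hc0 : 0 < c 0) (hc1 : c 1 < pq α 2) (n : ℕ) :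
    fseq α 1 < ostrowskiTail α c 0 (n + 1) := by
  have htail := ostrowskiTail_succ_lt_sub (m := 0) hα h0 hc hc1 n
  have hdigit : fseq α 0 ≤ c 0 * fseq α 0 :=
    le_mul_of_one_le_left (fseq_pos hα h0 0).le (by exact_mod_cast hc0)
  rw [ostrowskiTail_succ]
  linarith

theorem fseq_one_lt_fract_neg_ostrowskiTail (hα : Irrational α) (h0 : 0 < α) (h1 : α < 1)
    (hc : ∀ h, c h ≤ pq α (h + 1)) (hm : 0 < c (m + 1)) (n : ℕ) :
    fseq α 1 < Int.fract (-ostrowskiTail α c (m + 1) (n + 1)) := by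
  have hpos := ostrowskiTail_pos hα h0 hc hm n
  have hlt : ostrowskiTail α c (m + 1) (n + 1) < α :=
    calc ostrowskiTail α c (m + 1) (n + 1) < fseq α m := (ostrowskiTail_mem_Ioo hα h0 hc m _).2
      _ ≤ fseq α 0 := (fseq_strictAnti hα h0).antitone m.zero_le
      _ = α := fseq_zero α
  have hf1 : fseq α 1 ≤ 1 - α := by
    rw [fseq_one]
    gcongr
    exact le_mul_of_one_le_left h0.le (by exact_mod_cast one_le_pq_one h0 h1)
  rw [← Int.fract_add_one, Int.fract_eq_self.2 ⟨by linarith, by linarith⟩]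
  linarith

namespace IsOstrowski

theorem fract_mul_eq (hr : IsOstrowski α r (m + n) c) (hm : ∀ h < m, c h = 0) :
    Int.fract ((r : ℝ) * α) = Int.fract ((-1) ^ m * ostrowskiTail α c m (n + 1)) := by
  rw [hr.1, sum_mul_qden_mul_eq, Int.fract_natCast_add, add_assoc, ostrowskiTail_zero_add hm]

theorem digit_one_lt (hr : IsOstrowski α r N c) (hc0 : 0 < c 0) : c 1 < pq α 2 :=
  lt_of_le_of_ne (hr.2.1 1) fun h => hc0.ne' (hr.2.2.1 0 h)

theorem fract_mul_lt_fseq_one_iff (hα : Irrational α) (h0 : 0 < α) (h1 : α < 1)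
    (hr : IsOstrowski α r N c) (hm : IsLeast {h | 0 < c h} m) :
    Int.fract ((r : ℝ) * α) < fseq α 1 ↔ 2 ≤ m ∧ Even m := by
  obtain ⟨n, rfl⟩ := Nat.exists_eq_add_of_le (hm.2 hr.2.2.2.1)
  have hc := hr.2.1
  have hpos := ostrowskiTail_pos hα h0 hc hm.1 n
  rw [hr.fract_mul_eq fun h hh => Nat.eq_zero_of_not_pos fun hch => hh.not_ge (hm.2 hch)]
  rcases m.even_or_odd with heven | hodd
  · rw [heven.neg_one_pow, one_mul]
    rcases m with _ | m
    · rw [Int.fract_eq_self.2 ⟨hpos.le, ostrowskiTail_zero_lt_one hα h0 hc n⟩]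
      have hlt := fseq_one_lt_ostrowskiTail_zero hα h0 hc hm.1 (hr.digit_one_lt hm.1) n
      simp [hlt.le]
    · have hm1 : 1 ≤ m := by grind
      have hlt : ostrowskiTail α c (m + 1) (n + 1) < fseq α 1 :=
        (ostrowskiTail_mem_Ioo hα h0 hc m _).2.trans_le ((fseq_strictAnti hα h0).antitone hm1)
      have hlt_one := hlt.trans ((fseq_one_lt hα h0).trans h1)
      rw [Int.fract_eq_self.2 ⟨hpos.le, hlt_one⟩]
      exact iff_of_true hlt ⟨by omega, heven⟩
  · obtain ⟨m, rfl⟩ := Nat.exists_eq_add_one.2 hodd.pos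
    rw [hodd.neg_one_pow, neg_one_mul]
    exact iff_of_false (fseq_one_lt_fract_neg_ostrowskiTail hα h0 h1 hc hm.1 n).not_gt
      fun h => Nat.not_even_iff_odd.2 hodd h.2

end IsOstrowski

end Ostrowski

/-- a positive integer `r` satisfies `r = r_{k_j}` for some `j > 0`
iff in its Ostrowski representation `c_0 = c_1 = 0` and the smallest index `h`
with `c_h > 0` is an even number `≥ 2`. -/
theorem rkj_charac (α : ℝ) (hirr : Irrational α) (h0 : 0 < α) (h1 : α < 1)
    (r : ℕ) (hr : 0 < r) (N : ℕ) (c : ℕ → ℕ) (hOst : IsOstrowski α r N c) :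
    (∃ j, 0 < j ∧ r = rmin α (kseq α j)) ↔
      (c 0 = 0 ∧ c 1 = 0 ∧ 2 ≤ sInf {h | 0 < c h} ∧ Even (sInf {h | 0 < c h})) := by
  have hleast : IsLeast {h | 0 < c h} (sInf {h | 0 < c h}) := isLeast_csInf ⟨N, hOst.2.2.2.1⟩
  rw [exists_pos_eq_rmin_kseq_iff hirr h0 hr, hOst.fract_mul_lt_fseq_one_iff hirr h0 h1 hleast]
  have hdigits (h2 : 2 ≤ sInf {h | 0 < c h}) {h : ℕ} (hh : h < 2) : c h = 0 :=
    Nat.eq_zero_of_not_pos fun hch => (hh.trans_le h2).not_ge (hleast.2 hch)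
  exact ⟨fun h => ⟨hdigits h.1 zero_lt_two, hdigits h.1 one_lt_two, h⟩, fun h => h.2.2⟩
end
end
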